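/- Let a ∈ ℍ with Im a ≠ 0 and let c ∈ ℝ, c ≠ 0. Set c₀ = |c|/|Im a|. Then the quaternionic Mahler measure of the commutator polynomial L(q) = aq − qa + c is m_ℍ(L) = log|Im a| + (1/8)·((4 + c₀²)·log(4 + c₀²) − 2c₀²·log c₀ − 4). -/

import Mathlib

open MeasureTheory Quaternion

noncomputable instance : MeasurableSpace (Quaternion ℝ) := borel _
instance : BorelSpace (Quaternion ℝ) := ⟨rfl⟩
instance : Nonempty (Metric.sphere (0 : Quaternion ℝ) 1) := ⟨⟨1, by simp⟩⟩

/-- The probability Haar measure `μ` on the group `T¹(ℍ)` of unit quaternions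
(the Haar measure normalized so that the whole group has measure `1`). -/
noncomputable def muH : Measure (Metric.sphere (0 : Quaternion ℝ) 1) :=
  Measure.haarMeasure ⊤

/-- The quaternionic Mahler measure `m_ℍ(f) = ∫_{T¹(ℍ)} log |f(q)| dμ(q)`. -/
noncomputable def mahlerH (f : Quaternion ℝ → Quaternion ℝ) : ℝ :=
  ∫ q : Metric.sphere (0 : Quaternion ℝ) 1, Real.log ‖f q‖ ∂muH

open Set Real ENNReal

/-- The squared modulus pushes Lebesgue measure on `ℂ` forward to `π` times Lebesgue measure. -/
theorem lintegral_comp_norm_sq_complex {h : ℝ → ℝ≥0∞} (hh : Measurable h) :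
    ∫⁻ z : ℂ, h (‖z‖ ^ 2) = ENNReal.ofReal π * ∫⁻ s in Ioi (0 : ℝ), h s := by
  have himage : (fun r : ℝ => r ^ 2) '' Ioi 0 = Ioi 0 := by
    ext s
    simp only [mem_image, mem_Ioi]
    exact ⟨fun ⟨r, hr, e⟩ => e ▸ by positivity, fun hs => ⟨√s, by positivity, sq_sqrt hs.le⟩⟩
  have hsubst : ∫⁻ s in Ioi (0 : ℝ), h s
      = ∫⁻ r in Ioi (0 : ℝ), ENNReal.ofReal |2 * r| * h (r ^ 2) := by
    conv_lhs => rw [← himage]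
    refine lintegral_image_eq_lintegral_abs_deriv_mul measurableSet_Ioi
      (fun r _ => by simpa using (hasDerivAt_pow 2 r).hasDerivWithinAt) ?_ h
    intro x hx y hy hxy
    exact (pow_left_inj₀ (le_of_lt hx) (le_of_lt hy) two_ne_zero).1 hxy
  simp only [hsubst, ← Complex.lintegral_comp_polarCoord_symm, Complex.norm_polarCoord_symm, sq_abs,
    polarCoord_target]
  rw [Measure.volume_eq_prod, setLIntegral_prod _ (by fun_prop),
    ← lintegral_const_mul _ (by fun_prop)]
  refine setLIntegral_congr_fun measurableSet_Ioi fun r hr => ?_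
  have hr : 0 < r := hr
  simp only [lintegral_const, smul_eq_mul, Measure.restrict_apply MeasurableSet.univ,
    univ_inter, Real.volume_Ioo, abs_of_pos (mul_pos two_pos hr)]
  rw [← mul_assoc, ← ENNReal.ofReal_mul pi_pos.le, mul_right_comm, ← ENNReal.ofReal_mul hr.le]
  congr 2
  ring

/-- Integration over a four-dimensional Euclidean space of a function of the squared norms of the
projections to two complementary orthogonal planes. -/
theorem lintegral_comp_sq_norm_planes {E : Type*} [NormedAddCommGroup E] [InnerProductSpace ℝ E]
    [FiniteDimensional ℝ E] [MeasurableSpace E] [BorelSpace E]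
    (b : OrthonormalBasis (Fin 2 ⊕ Fin 2) ℝ E) {G : ℝ → ℝ → ℝ≥0∞}
    (hG : Measurable (Function.uncurry G)) :
    ∫⁻ x : E, G (b.repr x (.inl 0) ^ 2 + b.repr x (.inl 1) ^ 2)
        (b.repr x (.inr 0) ^ 2 + b.repr x (.inr 1) ^ 2)
      = ENNReal.ofReal π ^ 2 * ∫⁻ s in Ioi (0 : ℝ), ∫⁻ r in Ioi (0 : ℝ), G r s := by
  have hpres : MeasurePreserving
      (fun x : E => Prod.map Complex.measurableEquivPi.symm Complex.measurableEquivPi.symm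
        (MeasurableEquiv.sumPiEquivProdPi (fun _ : Fin 2 ⊕ Fin 2 => ℝ)
          (WithLp.ofLp (b.repr x)))) volume (volume.prod volume) :=
    (((Complex.volume_preserving_equiv_pi.symm _).prod
      (Complex.volume_preserving_equiv_pi.symm _)).comp
      (volume_measurePreserving_sumPiEquivProdPi _)).comp
      ((PiLp.volume_preserving_ofLp _).comp b.measurePreserving_repr)
  have key := hpres.lintegral_comp (f := fun p : ℂ × ℂ => G (‖p.1‖ ^ 2) (‖p.2‖ ^ 2))
    (by fun_prop)
  rw [lintegral_prod_symm _ (by fun_prop)] at key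
  have hfst (w : ℂ) : ∫⁻ z : ℂ, G (‖z‖ ^ 2) (‖w‖ ^ 2)
      = ENNReal.ofReal π * ∫⁻ r in Ioi (0 : ℝ), G r (‖w‖ ^ 2) :=
    lintegral_comp_norm_sq_complex (h := fun r => G r (‖w‖ ^ 2)) (by fun_prop)
  have hsnd := lintegral_comp_norm_sq_complex (h := fun s => ∫⁻ r in Ioi (0 : ℝ), G r s)
    (Measurable.lintegral_prod_left hG)
  simp only [hfst] at key
  rw [lintegral_const_mul _ (by fun_prop), hsnd,
    ← mul_assoc, ← sq] at key
  rw [← key]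
  refine lintegral_congr fun x => ?_
  simp only [Prod.map_fst, Prod.map_snd, Complex.measurableEquivPi_symm_apply,
    MeasurableEquiv.coe_sumPiEquivProdPi, Equiv.sumPiEquivProdPi_apply, ← Complex.normSq_eq_norm_sq,
    mul_comm _ Complex.I]
  simp [Complex.normSq_apply, sq]

/-- If `r` and `s` are independent exponential variables, then `s / (r + s)` is uniformly distributed
on the unit interval. -/
theorem lintegral_ratio_exp {h : ℝ → ℝ≥0∞} (hh : Measurable h) :
    ∫⁻ s in Ioi (0 : ℝ), ∫⁻ r in Ioi (0 : ℝ),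
      h (s / (r + s)) * ENNReal.ofReal (exp (-(r + s))) = ∫⁻ t in Ioo (0 : ℝ) 1, h t := by
  have hsubst (s : ℝ) (hs : s ∈ Ioi (0 : ℝ)) :
      ∫⁻ r in Ioi (0 : ℝ), h (s / (r + s)) * ENNReal.ofReal (exp (-(r + s)))
        = ∫⁻ t in Ioo (0 : ℝ) 1, h t * ENNReal.ofReal (s / t ^ 2 * exp (-(s / t))) := by
    have hs : 0 < s := hs
    have himage : (fun t : ℝ => s / t - s) '' Ioo 0 1 = Ioi 0 := by
      ext r
      simp only [mem_image, mem_Ioi, mem_Ioo]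
      constructor
      · rintro ⟨t, ⟨h0, h1⟩, rfl⟩
        rw [sub_pos, lt_div_iff₀ h0]
        nlinarith
      · intro hr
        refine ⟨s / (r + s), ⟨by positivity, (div_lt_one (by positivity)).2 (by linarith)⟩, ?_⟩
        field_simp
        ring
    conv_lhs => rw [← himage]
    rw [lintegral_image_eq_lintegral_abs_deriv_mul (f' := fun t => -(s / t ^ 2)) measurableSet_Ioo]
    · refine setLIntegral_congr_fun measurableSet_Ioo fun t ht => ?_
      have h0 : 0 < t := ht.1
      have e : s / (s / t - s + s) = t := by field_simp; ring
      simp only [e, abs_neg, abs_of_pos (show 0 < s / t ^ 2 by positivity)]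
      rw [ENNReal.ofReal_mul (by positivity), sub_add_cancel]
      ring
    · intro t ht
      have h0 : t ≠ 0 := ht.1.ne'
      have := (((hasDerivAt_inv h0).const_mul s).sub_const s).hasDerivWithinAt (s := Ioo 0 1)
      simpa only [div_eq_mul_inv, mul_neg, neg_mul, one_mul] using this
    · intro x hx y hy hxy
      have hx0 : x ≠ 0 := hx.1.ne'
      have hy0 : y ≠ 0 := hy.1.ne'
      have : s / x = s / y := by simpa using hxy
      field_simp at this
      exact this.symm
  rw [setLIntegral_congr_fun measurableSet_Ioi hsubst, lintegral_lintegral_swap (by fun_prop)]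
  refine setLIntegral_congr_fun measurableSet_Ioo fun t ht => ?_
  have h0 : 0 < t := ht.1
  have hint : ∫ s in Ioi (0 : ℝ), s / t ^ 2 * exp (-(s / t)) = 1 := by
    have := Real.integral_rpow_mul_exp_neg_mul_Ioi (a := 2) (r := 1 / t) two_pos (by positivity)
    rw [one_div_one_div, Real.Gamma_two, mul_one, Real.rpow_two] at this
    calc ∫ s in Ioi (0 : ℝ), s / t ^ 2 * exp (-(s / t))
        = ∫ s in Ioi (0 : ℝ), s ^ ((2 : ℝ) - 1) * exp (-(1 / t * s)) / t ^ 2 := by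
          refine integral_congr_ae (.of_forall fun s => ?_)
          norm_num
          ring_nf
      _ = 1 := by rw [integral_div, this, div_self (pow_ne_zero 2 h0.ne')]
  rw [lintegral_const_mul _ (by fun_prop), ← ofReal_integral_eq_lintegral_ofReal, hint]
  · simp
  · exact .of_integral_ne_zero (by simp [hint])
  · filter_upwards [self_mem_ae_restrict measurableSet_Ioi] with s hs
    have hs : 0 < s := hs
    positivity

open Classical in
/-- Radial projection to the unit sphere, with the origin sent to `1`. -/
noncomputable def quaternionNormalize (x : Quaternion ℝ) : Metric.sphere (0 : Quaternion ℝ) 1 :=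
  ⟨if x = 0 then 1 else ‖x‖⁻¹ • x, by
    split_ifs with h
    · simp
    · simp [norm_smul, h]⟩

theorem quaternionNormalize_coe {x : Quaternion ℝ} (hx : x ≠ 0) :
    (quaternionNormalize x : Quaternion ℝ) = ‖x‖⁻¹ • x := by
  simp [quaternionNormalize, hx]

theorem measurable_quaternionNormalize : Measurable quaternionNormalize := by
  classical exact (Measurable.ite (measurableSet_singleton (0 : Quaternion ℝ)) measurable_const
    (by fun_prop)).subtype_mk

theorem quaternionNormalize_mul (p : Metric.sphere (0 : Quaternion ℝ) 1) {x : Quaternion ℝ}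
    (hx : x ≠ 0) : quaternionNormalize (p * x) = p * quaternionNormalize x := by
  have hp : ‖(p : Quaternion ℝ)‖ = 1 := norm_eq_of_mem_sphere p
  have hp0 : (p : Quaternion ℝ) ≠ 0 := by
    rw [← norm_ne_zero_iff, hp]
    exact one_ne_zero
  ext1
  rw [quaternionNormalize_coe (mul_ne_zero hp0 hx), Metric.unitSphere.coe_mul,
    quaternionNormalize_coe hx, norm_mul, hp, one_mul, mul_smul_comm]

/-- The radial projection of the Gaussian weight `exp (-‖x‖ ^ 2)` on the quaternions. -/
noncomputable def gaussianSphere : Measure (Metric.sphere (0 : Quaternion ℝ) 1) :=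
  (volume.withDensity fun x : Quaternion ℝ => ENNReal.ofReal (exp (-‖x‖ ^ 2))).map
    quaternionNormalize

theorem lintegral_gaussianSphere {f : Metric.sphere (0 : Quaternion ℝ) 1 → ℝ≥0∞}
    (hf : Measurable f) :
    ∫⁻ q, f q ∂gaussianSphere
      = ∫⁻ x : Quaternion ℝ, f (quaternionNormalize x) * ENNReal.ofReal (exp (-‖x‖ ^ 2)) := by
  have hf' : Measurable fun x => f (quaternionNormalize x) :=
    hf.comp measurable_quaternionNormalize
  rw [gaussianSphere, lintegral_map hf measurable_quaternionNormalize,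
    lintegral_withDensity_eq_lintegral_mul _ (by fun_prop) hf']
  simp only [Pi.mul_apply, mul_comm]

/-- Left multiplication by a unit quaternion preserves Lebesgue measure. -/
theorem measurePreserving_unit_mul (p : Metric.sphere (0 : Quaternion ℝ) 1) :
    MeasurePreserving (fun x : Quaternion ℝ => p * x) := by
  have hp : ‖(p : Quaternion ℝ)‖ = 1 := norm_eq_of_mem_sphere p
  let l : Quaternion ℝ →ₗᵢ[ℝ] Quaternion ℝ :=
    ⟨LinearMap.mulLeft ℝ (p : Quaternion ℝ), fun x => by simp [hp]⟩
  exact (l.toLinearIsometryEquiv rfl).measurePreserving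

instance : gaussianSphere.IsMulLeftInvariant where
  map_mul_left_eq_self p := by
    refine Measure.ext_of_lintegral _ fun f hf => ?_
    have hp : ‖(p : Quaternion ℝ)‖ = 1 := norm_eq_of_mem_sphere p
    have hmeas : Measurable fun x : Quaternion ℝ =>
        f (quaternionNormalize x) * ENNReal.ofReal (exp (-‖x‖ ^ 2)) :=
      (hf.comp measurable_quaternionNormalize).mul (by fun_prop)
    rw [lintegral_map hf (by fun_prop), lintegral_gaussianSphere hf,
      lintegral_gaussianSphere (f := fun q => f (p * q)) (by fun_prop),
      ← (measurePreserving_unit_mul p).lintegral_comp hmeas]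
    refine lintegral_congr_ae ?_
    filter_upwards [compl_mem_ae_iff.2 (measure_singleton (0 : Quaternion ℝ))] with x hx
    rw [quaternionNormalize_mul p hx, norm_mul, hp, one_mul]

/-- If `1, u` are orthonormal, then the squared distance of a random unit quaternion to the plane
spanned by `1, u` is uniformly distributed on the unit interval. -/
theorem map_sq_dist_plane_muH {u : Quaternion ℝ} (hu : ‖u‖ = 1) (hu1 : inner ℝ 1 u = 0) :
    muH.map (fun q : Metric.sphere (0 : Quaternion ℝ) 1 =>
        1 - inner ℝ 1 (q : Quaternion ℝ) ^ 2 - inner ℝ u (q : Quaternion ℝ) ^ 2)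
      = volume.restrict (Ioo 0 1) := by
  obtain ⟨b, hb⟩ : ∃ b : OrthonormalBasis (Fin 2 ⊕ Fin 2) ℝ (Quaternion ℝ),
      ∀ i ∈ range (Sum.inl : Fin 2 → Fin 2 ⊕ Fin 2), b i = Sum.elim ![1, u] 0 i := by
    refine Orthonormal.exists_orthonormalBasis_extension_of_card_eq
      (by simp [Quaternion.finrank_eq_four]) ?_
    rw [orthonormal_iff_ite]
    rintro ⟨_, i, rfl⟩ ⟨_, j, rfl⟩
    fin_cases i <;> fin_cases j <;>
      simp [hu, hu1, real_inner_comm 1 u]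
  have hb0 : b (.inl 0) = 1 := by simpa using hb (.inl 0) ⟨0, rfl⟩
  have hb1 : b (.inl 1) = u := by simpa using hb (.inl 1) ⟨1, rfl⟩
  have hnorm (x : Quaternion ℝ) : ‖x‖ ^ 2 = b.repr x (.inl 0) ^ 2 + b.repr x (.inl 1) ^ 2
      + (b.repr x (.inr 0) ^ 2 + b.repr x (.inr 1) ^ 2) := by
    rw [← b.repr.norm_map, EuclideanSpace.norm_sq_eq]
    simp
  have hτ : Measurable fun q : Metric.sphere (0 : Quaternion ℝ) 1 =>
      1 - inner ℝ 1 (q : Quaternion ℝ) ^ 2 - inner ℝ u (q : Quaternion ℝ) ^ 2 := by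
    fun_prop
  have key {h : ℝ → ℝ≥0∞} (hh : Measurable h) :
      ∫⁻ t, h t ∂(gaussianSphere.map fun q : Metric.sphere (0 : Quaternion ℝ) 1 =>
        1 - inner ℝ 1 (q : Quaternion ℝ) ^ 2 - inner ℝ u (q : Quaternion ℝ) ^ 2)
        = ENNReal.ofReal π ^ 2 * ∫⁻ t in Ioo (0 : ℝ) 1, h t := by
    rw [lintegral_map hh hτ, lintegral_gaussianSphere (by fun_prop), ← lintegral_ratio_exp hh,
      ← lintegral_comp_sq_norm_planes b
        (G := fun r s => h (s / (r + s)) * ENNReal.ofReal (exp (-(r + s)))) (by fun_prop)]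
    refine lintegral_congr_ae ?_
    filter_upwards [compl_mem_ae_iff.2 (measure_singleton (0 : Quaternion ℝ))] with x hx
    have hx : x ≠ 0 := hx
    have hx' : ‖x‖ ≠ 0 := norm_ne_zero_iff.2 hx
    rw [← hnorm, quaternionNormalize_coe hx, inner_smul_right, inner_smul_right]
    congr 2
    have h0 : inner ℝ 1 x = b.repr x (.inl 0) := by rw [b.repr_apply_apply, hb0]
    have h1 : inner ℝ u x = b.repr x (.inl 1) := by rw [b.repr_apply_apply, hb1]
    rw [h0, h1]
    field_simp
    rw [hnorm]
    ring
  have hπ0 : ENNReal.ofReal π ^ 2 ≠ 0 := by simp [pi_pos]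
  have hπt : ENNReal.ofReal π ^ 2 ≠ ∞ := by simp
  have huniv : gaussianSphere univ = ENNReal.ofReal π ^ 2 := by
    have := key (h := fun _ => 1) measurable_const
    rw [lintegral_map measurable_const hτ] at this
    simpa using this
  have : IsFiniteMeasure gaussianSphere := ⟨by rw [huniv]; exact hπt.lt_top⟩
  have hmu : gaussianSphere = ENNReal.ofReal π ^ 2 • muH := by
    have := Measure.haarMeasure_unique gaussianSphere ⊤
    rwa [TopologicalSpace.PositiveCompacts.coe_top, huniv] at this
  refine Measure.ext_of_lintegral _ fun h hh => ?_
  have := key hh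
  rw [hmu, Measure.map_smul, lintegral_smul_measure, smul_eq_mul] at this
  exact (ENNReal.mul_right_inj hπ0 hπt).1 this

theorem norm_sq_commutator_add_const (a q : Quaternion ℝ) (c : ℝ) :
    ‖a * q - q * a + (c : Quaternion ℝ)‖ ^ 2
      = c ^ 2 + 4 * (‖a.im‖ ^ 2 * (‖q‖ ^ 2 - inner ℝ 1 q ^ 2) - inner ℝ a.im q ^ 2) := by
  simp only [← Quaternion.normSq_eq_norm_mul_self, sq ‖_‖, Quaternion.normSq_def',
    Quaternion.inner_def]
  simp
  ring

/-- Mahler measure of the commutator polynomial `ax - xa + c`. -/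
theorem mahlerH_commutator_add_const (a : Quaternion ℝ) (ha : a.im ≠ 0)
    (c : ℝ) (hc : c ≠ 0) (c0 : ℝ) (hc0 : c0 = |c| / ‖a.im‖) :
    mahlerH (fun q => a * q - q * a + (c : Quaternion ℝ)) =
      Real.log ‖a.im‖ +
        (1 / 8) * ((4 + c0 ^ 2) * Real.log (4 + c0 ^ 2) - 2 * c0 ^ 2 * Real.log c0 - 4) := by
  have hA : 0 < ‖a.im‖ := norm_pos_iff.2 ha
  have hc0pos : 0 < c0 := hc0 ▸ div_pos (abs_pos.2 hc) hA
  have hcsq : c ^ 2 = ‖a.im‖ ^ 2 * c0 ^ 2 := by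
    rw [hc0, div_pow, sq_abs]
    field_simp
  set u : Quaternion ℝ := ‖a.im‖⁻¹ • a.im with hu_def
  have hu : ‖u‖ = 1 := by rw [hu_def, norm_smul, norm_inv, norm_norm, inv_mul_cancel₀ hA.ne']
  have hu1 : inner ℝ 1 u = 0 := by simp [hu_def, Quaternion.inner_def]
  have hau : a.im = ‖a.im‖ • u := by rw [hu_def, smul_inv_smul₀ hA.ne']
  let τ (q : Metric.sphere (0 : Quaternion ℝ) 1) : ℝ :=
    1 - inner ℝ 1 (q : Quaternion ℝ) ^ 2 - inner ℝ u (q : Quaternion ℝ) ^ 2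
  have hτ : Measurable τ := by fun_prop
  have hsq (q : Metric.sphere (0 : Quaternion ℝ) 1) (d : ℝ) :
      ‖a * q - q * a + (d : Quaternion ℝ)‖ ^ 2 = d ^ 2 + ‖a.im‖ ^ 2 * (4 * τ q) := by
    have hq : ‖(q : Quaternion ℝ)‖ = 1 := norm_eq_of_mem_sphere q
    have hin : inner ℝ a.im (q : Quaternion ℝ) = ‖a.im‖ * inner ℝ u (q : Quaternion ℝ) := by
      conv_lhs => rw [hau, real_inner_smul_left]
    rw [norm_sq_commutator_add_const, hq, hin]
    ring
  have hlog (q : Metric.sphere (0 : Quaternion ℝ) 1) :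
      Real.log ‖a * q - q * a + (c : Quaternion ℝ)‖
        = Real.log ‖a.im‖ + 1 / 2 * Real.log (4 * τ q + c0 ^ 2) := by
    have hnonneg : 0 ≤ 4 * τ q := by
      have h0 : 0 ≤ ‖a.im‖ ^ 2 * (4 * τ q) := by
        simpa using (sq_nonneg _).trans_eq (hsq q 0)
      exact nonneg_of_mul_nonneg_right h0 (by positivity)
    have hlogsq := congrArg Real.log (hsq q c)
    rw [hcsq, ← mul_add, add_comm (c0 ^ 2), Real.log_mul (by positivity) (by positivity),
      Real.log_pow, Real.log_pow] at hlogsq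
    push_cast at hlogsq
    linarith
  have hmap : muH.map τ = volume.restrict (Ioo 0 1) := map_sq_dist_plane_muH hu hu1
  rw [mahlerH]
  simp only [hlog]
  rw [← integral_map (φ := τ) (f := fun t => Real.log ‖a.im‖ + 1 / 2 * Real.log (4 * t + c0 ^ 2))
      hτ.aemeasurable (Measurable.aestronglyMeasurable (by fun_prop)), hmap, ← integral_Ioc_eq_integral_Ioo,
    ← intervalIntegral.integral_of_le zero_le_one]
  rw [intervalIntegral.integral_add (by simp), intervalIntegral.integral_const_mul,
    intervalIntegral.integral_comp_mul_add (f := Real.log) (by norm_num) , integral_log]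
  · simp [Real.log_pow]
    ring
  · refine ContinuousOn.intervalIntegrable_of_Icc zero_le_one ?_
    refine continuousOn_const.mul (ContinuousOn.log (by fun_prop) fun t ht => ?_)
    have := ht.1
    positivity
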